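/- For every integer n ≥ 1 there exist a constant C_n > 0 and λ₀ ∈ (0,1] such that for all λ ∈ (0,λ₀) and all (x,p) ∈ ℝ², K_{λ,n}(x,p) ≤ C_n·(1 + λ|p|)^{n+1}. -/

import Mathlib

open MeasureTheory Real

/-- Standard Gaussian density. -/
noncomputable def gauss (q : ℝ) : ℝ := (Real.sqrt (2 * Real.pi))⁻¹ * Real.exp (-q ^ 2 / 2)

/-- The constant η = (1/16)·√(π/2). -/
noncomputable def eta : ℝ := (1 / 16) * Real.sqrt (Real.pi / 2)

/-- Collision jump-rate kernel. -/
noncomputable def Jker (lam p p' : ℝ) : ℝ :=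
  (eta * (1 + lam) / 2) * |p' - p| * gauss (((1 - lam) / 2) * p' - ((1 + lam) / 2) * p)

/-- Escape rate. -/
noncomputable def Esc (lam p : ℝ) : ℝ := ∫ p' : ℝ, Jker lam p p'

/-- The Hamiltonian H(x,p) = p²/2 + V(x). -/
noncomputable def Ham (V : ℝ → ℝ) (x p : ℝ) : ℝ := p ^ 2 / 2 + V x

/-- A_λ(x,p): expected jump of √2·H^{1/2} under the kernel. -/
noncomputable def Afun (V : ℝ → ℝ) (lam x p : ℝ) : ℝ :=
  ∫ p' : ℝ,
    (Real.sqrt 2 * Real.sqrt (Ham V x p') - Real.sqrt 2 * Real.sqrt (Ham V x p)) *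
      Jker lam p p'

/-- K_{λ,n}(x,p). -/
noncomputable def Kfun (V : ℝ → ℝ) (lam : ℝ) (n : ℕ) (x p : ℝ) : ℝ :=
  ∫ p' : ℝ, |Real.sqrt (Ham V x p') - Real.sqrt (Ham V x p)| ^ n * Jker lam p p'

/-!
With `q = ((1 - λ) / 2) p' - ((1 + λ) / 2) p` the argument of the Gaussian in `J_λ(p, p')`, one has
`((1 - λ) / 2) (p' - p) = q + λ p`, so a jump is at most `2 / |1 - λ|` times
`(1 + |q|) (1 + λ |p|)`. As `p ↦ H(x, p)^{1/2}` is `1`-Lipschitz, the integrand of `K_{λ,n}` is at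
most a constant times `(1 + λ |p|)^{n+1} (1 + |q|)^{n+1} g(q)`, and integrating in `q` instead of
`p'` leaves a Gaussian moment, which does not depend on `p`, `x` or `V`. The constants, including the
Jacobian `2 / |1 - λ|`, are bounded uniformly in `λ ≤ λ₀ < 1`.
-/

section Gaussian

open ProbabilityTheory

/-- The moment `∫ (1 + |q|)^m g(q) dq` of the standard Gaussian density `g`. It is the source of the
constant `C_n`, with `m = n + 1`. -/
noncomputable def gaussMoment (m : ℕ) : ℝ := ∫ q : ℝ, (1 + |q|) ^ m * gauss q

lemma gauss_eq_gaussianPDFReal : gauss = gaussianPDFReal 0 1 := by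
  ext q
  simp [gauss, gaussianPDFReal]

lemma gauss_nonneg (q : ℝ) : 0 ≤ gauss q := by
  unfold gauss
  positivity

lemma integrable_one_add_abs_pow_mul_gauss (m : ℕ) :
    Integrable fun q : ℝ => (1 + |q|) ^ m * gauss q := by
  have habs : MemLp (fun q : ℝ => |q|) m (gaussianReal 0 1) :=
    (memLp_id_gaussianReal' m (ENNReal.natCast_ne_top m)).norm
  have hmemLp : MemLp (fun q : ℝ => 1 + |q|) m (gaussianReal 0 1) := (memLp_const (1 : ℝ)).add habs
  have hint : Integrable (fun q : ℝ => (1 + |q|) ^ m) (gaussianReal 0 1) := by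
    have hnorm (q : ℝ) : ‖1 + |q|‖ = 1 + |q| := norm_of_nonneg (by positivity)
    simpa only [hnorm] using hmemLp.integrable_norm_pow'
  rw [gaussianReal_of_var_ne_zero 0 one_ne_zero,
    integrable_withDensity_iff_integrable_smul' (measurable_gaussianPDF 0 1)
      (.of_forall fun _ => gaussianPDF_lt_top)] at hint
  simpa only [toReal_gaussianPDF, smul_eq_mul, ← gauss_eq_gaussianPDFReal, mul_comm] using hint

lemma one_le_gaussMoment (m : ℕ) : 1 ≤ gaussMoment m := by
  have hgauss : Integrable gauss := gauss_eq_gaussianPDFReal ▸ integrable_gaussianPDFReal 0 1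
  calc 1 = ∫ q, gauss q := by
        rw [gauss_eq_gaussianPDFReal, integral_gaussianPDFReal_eq_one 0 one_ne_zero]
    _ ≤ gaussMoment m :=
        integral_mono hgauss (integrable_one_add_abs_pow_mul_gauss m) fun q =>
          le_mul_of_one_le_left (gauss_nonneg q)
            (one_le_pow₀ (le_add_of_nonneg_right (abs_nonneg q)))

end Gaussian

lemma integral_comp_mul_left_sub {E : Type*} [NormedAddCommGroup E] [NormedSpace ℝ E]
    (f : ℝ → E) (a b : ℝ) : ∫ y, f (a * y - b) = |a⁻¹| • ∫ y, f y := by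
  rw [Measure.integral_comp_mul_left (fun y => f (y - b)) a, integral_sub_right_eq_self f b]

lemma abs_sqrt_sq_add_sub_sqrt_sq_add_le (a b : ℝ) {c : ℝ} (hc : 0 ≤ c) :
    |√(a ^ 2 + c) - √(b ^ 2 + c)| ≤ |a - b| := by
  -- `√(a ^ 2 + c)` is the norm of `a + √c i`, so this is the reverse triangle inequality in `ℂ`.
  have hnorm (t : ℝ) : ‖(t + √c * Complex.I : ℂ)‖ = √(t ^ 2 + c) := by
    rw [Complex.norm_add_mul_I, sq_sqrt hc]
  calc |√(a ^ 2 + c) - √(b ^ 2 + c)|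
      = |‖(a + √c * Complex.I : ℂ)‖ - ‖(b + √c * Complex.I : ℂ)‖| := by rw [hnorm, hnorm]
    _ ≤ ‖(a + √c * Complex.I : ℂ) - (b + √c * Complex.I)‖ := abs_norm_sub_norm_le _ _
    _ = |a - b| := by
        rw [add_sub_add_right_eq_sub, ← Complex.ofReal_sub, Complex.norm_real, norm_eq_abs]

lemma abs_sqrt_Ham_sub_sqrt_Ham_le {V : ℝ → ℝ} {x : ℝ} (hV : 0 ≤ V x) (p p' : ℝ) :
    |√(Ham V x p') - √(Ham V x p)| ≤ |p' - p| := by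
  have hHam (r : ℝ) : Ham V x r = (r / √2) ^ 2 + V x := by
    rw [Ham, div_pow, sq_sqrt zero_le_two]
  calc |√(Ham V x p') - √(Ham V x p)|
      ≤ |p' / √2 - p / √2| := by
        rw [hHam, hHam]
        exact abs_sqrt_sq_add_sub_sqrt_sq_add_le _ _ hV
    _ = |p' - p| / √2 := by rw [← sub_div, abs_div, abs_of_nonneg (sqrt_nonneg 2)]
    _ ≤ |p' - p| := div_le_self (abs_nonneg _) (one_le_sqrt.mpr one_le_two)

lemma eta_pos : 0 < eta := by
  unfold eta
  positivity

section Kernel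

variable {lam : ℝ}

lemma Jker_nonneg (hlam : 0 ≤ lam) (p p' : ℝ) : 0 ≤ Jker lam p p' := by
  have := eta_pos
  have := gauss_nonneg ((1 - lam) / 2 * p' - (1 + lam) / 2 * p)
  unfold Jker
  positivity

lemma abs_sub_le_mul_one_add_abs (hlam : 0 ≤ lam) (hlam1 : lam ≠ 1) (p p' : ℝ) :
    |p' - p| ≤ 2 / |1 - lam| *
      ((1 + |(1 - lam) / 2 * p' - (1 + lam) / 2 * p|) * (1 + lam * |p|)) := by
  set q := (1 - lam) / 2 * p' - (1 + lam) / 2 * p with hq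
  have hne : 1 - lam ≠ 0 := sub_ne_zero.mpr hlam1.symm
  have hjump : p' - p = 2 / (1 - lam) * (q + lam * p) := by
    rw [hq]
    field_simp
    ring
  have hsum : |q + lam * p| ≤ (1 + |q|) * (1 + lam * |p|) := by
    calc |q + lam * p| ≤ |q| + |lam * p| := abs_add_le _ _
      _ = |q| + lam * |p| := by rw [abs_mul, abs_of_nonneg hlam]
      _ ≤ (1 + |q|) * (1 + lam * |p|) := by
          have : 0 ≤ |q| * (lam * |p|) := by positivity
          linarith
  rw [hjump, abs_mul, abs_div, abs_two]
  gcongr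

lemma abs_sqrt_Ham_sub_pow_mul_Jker_le {V : ℝ → ℝ} {x : ℝ} (hV : 0 ≤ V x) (hlam : 0 ≤ lam)
    (hlam1 : lam ≠ 1) (n : ℕ) (p p' : ℝ) :
    |√(Ham V x p') - √(Ham V x p)| ^ n * Jker lam p p' ≤
      eta * (1 + lam) / 2 * (2 / |1 - lam| * (1 + lam * |p|)) ^ (n + 1) *
        ((1 + |(1 - lam) / 2 * p' - (1 + lam) / 2 * p|) ^ (n + 1) *
          gauss ((1 - lam) / 2 * p' - (1 + lam) / 2 * p)) := by
  have heta := eta_pos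
  have hJ := Jker_nonneg hlam p p'
  have hjump := abs_sub_le_mul_one_add_abs hlam hlam1 p p'
  unfold Jker at hJ ⊢
  set q := (1 - lam) / 2 * p' - (1 + lam) / 2 * p
  have hg := gauss_nonneg q
  calc |√(Ham V x p') - √(Ham V x p)| ^ n * (eta * (1 + lam) / 2 * |p' - p| * gauss q)
      ≤ |p' - p| ^ n * (eta * (1 + lam) / 2 * |p' - p| * gauss q) := by
        gcongr ?_ ^ n * _
        exact abs_sqrt_Ham_sub_sqrt_Ham_le hV p p'
    _ = eta * (1 + lam) / 2 * |p' - p| ^ (n + 1) * gauss q := by ring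
    _ ≤ eta * (1 + lam) / 2 * (2 / |1 - lam| * ((1 + |q|) * (1 + lam * |p|))) ^ (n + 1) *
          gauss q := by gcongr
    _ = eta * (1 + lam) / 2 * (2 / |1 - lam| * (1 + lam * |p|)) ^ (n + 1) *
          ((1 + |q|) ^ (n + 1) * gauss q) := by simp only [mul_pow]; ring

lemma Kfun_le {V : ℝ → ℝ} {x : ℝ} (hV : 0 ≤ V x) (hlam : 0 ≤ lam) (hlam1 : lam ≠ 1)
    (n : ℕ) (p : ℝ) :
    Kfun V lam n x p ≤ eta * (1 + lam) / 2 * (2 / |1 - lam|) ^ (n + 2) * gaussMoment (n + 1) *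
      (1 + lam * |p|) ^ (n + 1) := by
  set a := (1 - lam) / 2 with ha
  set b := (1 + lam) / 2 * p
  set A := eta * (1 + lam) / 2 * (2 / |1 - lam| * (1 + lam * |p|)) ^ (n + 1)
  let f : ℝ → ℝ := fun q => (1 + |q|) ^ (n + 1) * gauss q
  have ha0 : a ≠ 0 := div_ne_zero (sub_ne_zero.mpr hlam1.symm) two_ne_zero
  have hint : Integrable fun p' => f (a * p' - b) :=
    ((integrable_one_add_abs_pow_mul_gauss (n + 1)).comp_sub_right b).comp_mul_left' ha0
  calc Kfun V lam n x p ≤ ∫ p', A * f (a * p' - b) :=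
        integral_mono_of_nonneg
          (.of_forall fun p' => mul_nonneg (by positivity) (Jker_nonneg hlam p p'))
          (hint.const_mul A)
          (.of_forall fun p' => abs_sqrt_Ham_sub_pow_mul_Jker_le hV hlam hlam1 n p p')
    _ = A * (2 / |1 - lam| * gaussMoment (n + 1)) := by
        rw [integral_const_mul, integral_comp_mul_left_sub, smul_eq_mul, ha, inv_div, abs_div,
          abs_two, gaussMoment]
    _ = eta * (1 + lam) / 2 * (2 / |1 - lam|) ^ (n + 2) * gaussMoment (n + 1) *
          (1 + lam * |p|) ^ (n + 1) := by
        simp only [A, mul_pow]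
        ring

end Kernel

theorem stmt_9_general (n : ℕ) {lam₀ : ℝ} (hlam₀ : lam₀ < 1) :
    ∃ C : ℝ, 0 < C ∧ ∀ (V : ℝ → ℝ) (x : ℝ), 0 ≤ V x → ∀ lam : ℝ, 0 ≤ lam → lam ≤ lam₀ → ∀ p : ℝ,
      Kfun V lam n x p ≤ C * (1 + lam * |p|) ^ (n + 1) := by
  have heta := eta_pos
  have hM : 0 < gaussMoment (n + 1) := one_pos.trans_le (one_le_gaussMoment (n + 1))
  have : 0 < 1 - lam₀ := sub_pos.mpr hlam₀
  refine ⟨eta * (2 / (1 - lam₀)) ^ (n + 2) * gaussMoment (n + 1), by positivity, ?_⟩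
  intro V x hV lam hlam hle p
  have hlam1 : lam < 1 := hle.trans_lt hlam₀
  have hrate : eta * (1 + lam) / 2 ≤ eta := by nlinarith
  refine (Kfun_le hV hlam hlam1.ne n p).trans ?_
  rw [abs_of_pos (sub_pos.mpr hlam1)]
  gcongr

theorem stmt_9 (V : ℝ → ℝ) (hV : ContDiff ℝ 1 V) (hVpos : ∀ x, 0 ≤ V x)
    (hVper : Function.Periodic V 1) :
    ∀ n : ℕ, 1 ≤ n → ∃ C : ℝ, 0 < C ∧ ∃ lam₀ ∈ Set.Ioc (0 : ℝ) 1,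
      ∀ lam : ℝ, 0 < lam → lam < lam₀ → ∀ x p : ℝ,
        Kfun V lam n x p ≤ C * (1 + lam * |p|) ^ (n + 1) := by
  intro n _
  obtain ⟨C, hC, hK⟩ := stmt_9_general n (lam₀ := 1 / 2) (by norm_num)
  exact ⟨C, hC, 1 / 2, by norm_num, fun lam hpos hlt x p => hK V x (hVpos x) lam hpos.le hlt.le p⟩
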